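/- Assume $1 < d < q$, $1 \le r \le m+1$, and let $F_1, \dots, F_r$ be linearly independent homogeneous polynomials of degree $d$ in $\mathbb{F}_q[x_0,\dots,x_m]$ with $\deg \gcd(F_i, F_j) = d-1$ for all $i \ne j$, $\deg \gcd(F_1,\dots,F_r) < d-1$, and such that $F_1, \dots, F_r$ have no common linear factor. Then $|V(F_1, \dots, F_r)| < (d-1)q^{m-1} + p_{m-2} + \lfloor q^{m-r} \rfloor$. -/

import Mathlib

open MvPolynomial

/-- `pp q k` is the number of points of `ℙ^k(F_q)`, zero for negative `k`. -/
noncomputable def pp (q : ℕ) (k : ℤ) : ℕ :=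
  if k < 0 then 0 else ∑ i ∈ Finset.range (k.toNat + 1), q ^ i

/-- `flq q m r` is `⌊q^(m-r)⌋`: `q^(m-r)` for `r ≤ m` and `0` otherwise. -/
noncomputable def flq (q m r : ℕ) : ℕ := if r ≤ m then q ^ (m - r) else 0

/-!
The punctured affine cone over `V(F₁, …, F_r)` has `(q - 1) |V|` points, so it is enough to count
nonzero common zeros in `K^(m+1)`. Among the `Fᵢ` there are `F₁, F₂` with a common divisor `D` of
degree `d - 1` that does not divide some `F₃`, and `F₁, F₃` have a common divisor `E` of degree
`d - 1`. Comparing the two factorizations of `F₁` gives `F₁ = G a c`, `F₂ = G b c`, `F₃ = G a e`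
with `deg G = d - 2` and linear forms `a, b, c, e` such that `(a, b)`, `(a, c)` and `(c, e)` are
independent. A common zero of the three is a zero of `G` or lies on one of the three
codimension-two subspaces `a = b = 0`, `a = c = 0`, `c = e = 0`. Schwartz–Zippel bounds the zeros
of `G` by `(d - 2) q^m`, and the nonzero vectors of the subspaces number at most
`3 (q^(m-1) - 1)`; `d < q` leaves room for a strict inequality without the term `⌊q^(m-r)⌋`.
-/

section Algebra

theorem isHomogeneous_of_mul_left {σ R : Type*} [CommRing R] [IsDomain R]
    {p a : MvPolynomial σ R} {n k : ℕ} (hp : p.IsHomogeneous n) (hp0 : p ≠ 0)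
    (hpa : (p * a).IsHomogeneous (n + k)) : a.IsHomogeneous k := by
  let : GradedAlgebra (homogeneousSubmodule σ R) := gradedAlgebra
  have hmul : p * a = p * DirectSum.decompose (homogeneousSubmodule σ R) a k := by
    rw [← DirectSum.coe_decompose_mul_add_of_left_mem _ hp, DirectSum.decompose_of_mem_same _ hpa]
  rw [mul_left_cancel₀ hp0 hmul]
  exact (DirectSum.decompose (homogeneousSubmodule σ R) a k).2

theorem eval_smul_of_isHomogeneous {σ R : Type*} [CommSemiring R] {p : MvPolynomial σ R} {n : ℕ}
    (hp : p.IsHomogeneous n) (u : R) (v : σ → R) : eval (u • v) p = u ^ n * eval v p := by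
  rw [eval_eq, eval_eq, Finset.mul_sum]
  refine Finset.sum_congr rfl fun s hs ↦ ?_
  rw [hp.degree_eq_sum_deg_support hs, ← Finset.prod_pow_eq_pow_sum]
  simp only [Pi.smul_apply, smul_eq_mul, mul_pow, Finset.prod_mul_distrib]
  ring

variable {σ K : Type*} [Field K]

theorem prime_of_isHomogeneous_one {p : MvPolynomial σ K} (hp : p.IsHomogeneous 1) (hp0 : p ≠ 0) :
    Prime p := by
  refine (irreducible_of_totalDegree_eq_one (hp.totalDegree hp0) fun x hx ↦ ?_).prime
  obtain ⟨s, hs⟩ := exists_coeff_ne_zero hp0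
  exact isUnit_iff_ne_zero.mpr fun hx0 ↦ hs (zero_dvd_iff.mp (hx0 ▸ hx s))

theorem not_dvd_of_linearIndependent {p q : MvPolynomial σ K} {n : ℕ} (hp : p.IsHomogeneous n)
    (hq : q.IsHomogeneous n) (hpq : LinearIndependent K ![p, q]) : ¬ p ∣ q := by
  rintro ⟨w, rfl⟩
  have hp0 : p ≠ 0 := hpq.ne_zero 0
  have hw : w.IsHomogeneous 0 := isHomogeneous_of_mul_left hp hp0 hq
  obtain ⟨s, rfl⟩ : ∃ s, w = C s :=
    ⟨_, totalDegree_eq_zero_iff_eq_C.mp (Nat.le_zero.mp hw.totalDegree_le)⟩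
  exact (LinearIndependent.pair_iff' hp0).mp hpq s (by rw [smul_eq_C_mul, mul_comm])

theorem exists_linear_cofactors {F₁ F₂ D : MvPolynomial σ K} {n : ℕ}
    (h₁ : F₁.IsHomogeneous (n + 1)) (h₂ : F₂.IsHomogeneous (n + 1))
    (h₁₂ : LinearIndependent K ![F₁, F₂]) (hD : D.IsHomogeneous n) (hD₁ : D ∣ F₁) (hD₂ : D ∣ F₂) :
    ∃ a b : MvPolynomial σ K, a.IsHomogeneous 1 ∧ b.IsHomogeneous 1 ∧
      LinearIndependent K ![a, b] ∧ F₁ = D * a ∧ F₂ = D * b := by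
  obtain ⟨a, rfl⟩ := hD₁
  obtain ⟨b, rfl⟩ := hD₂
  have hD0 : D ≠ 0 := left_ne_zero_of_mul (h₁₂.ne_zero 0)
  refine ⟨a, b, isHomogeneous_of_mul_left hD hD0 h₁, isHomogeneous_of_mul_left hD hD0 h₂,
    LinearIndependent.pair_iff.mpr fun s t hst ↦ ?_, rfl, rfl⟩
  refine LinearIndependent.pair_iff.mp h₁₂ s t ?_
  rw [← mul_smul_comm, ← mul_smul_comm, ← mul_add, hst, mul_zero]

theorem linearIndependent_of_mul_eq_mul {D E a c : MvPolynomial σ K} (ha0 : a ≠ 0) (hc0 : c ≠ 0)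
    (h : D * a = E * c) (hDE : ¬ D ∣ E) : LinearIndependent K ![a, c] := by
  refine (LinearIndependent.pair_iff' ha0).mpr ?_
  rintro s rfl
  have hs0 : s ≠ 0 := left_ne_zero_of_smul hc0
  have hD : D = s • E := mul_right_cancel₀ ha0 (by rw [h, mul_smul_comm, smul_mul_assoc])
  exact hDE ⟨C s⁻¹, by rw [hD, mul_comm, ← smul_eq_C_mul, inv_smul_smul₀ hs0]⟩

theorem exists_common_cofactor {D E a c : MvPolynomial σ K} {n : ℕ} (hE : E.IsHomogeneous (n + 1))
    (ha : a.IsHomogeneous 1) (hc : c.IsHomogeneous 1) (hac : LinearIndependent K ![a, c])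
    (h : D * a = E * c) :
    ∃ G : MvPolynomial σ K, G.IsHomogeneous n ∧ D = c * G ∧ E = a * G := by
  have ha0 : a ≠ 0 := hac.ne_zero 0
  obtain ⟨G, rfl⟩ : a ∣ E := ((prime_of_isHomogeneous_one ha ha0).dvd_or_dvd
    (h ▸ dvd_mul_left a D)).resolve_right (not_dvd_of_linearIndependent ha hc hac)
  refine ⟨G, isHomogeneous_of_mul_left ha ha0 (by rwa [add_comm]), ?_, rfl⟩
  exact mul_right_cancel₀ ha0 (by rw [h]; ring)

theorem exists_close_triple {ι : Type*} [Nonempty σ] {F : ι → MvPolynomial σ K} {n : ℕ}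
    (hF : ∀ i, (F i).IsHomogeneous (n + 1)) (hF0 : ∀ i, F i ≠ 0)
    (hgcd : ∀ i j, i ≠ j → ∃ D : MvPolynomial σ K, D.IsHomogeneous n ∧ D ∣ F i ∧ D ∣ F j)
    (hdeg : ∀ E : MvPolynomial σ K, (∀ i, E ∣ F i) → E.totalDegree < n) :
    ∃ (i j k : ι) (D E : MvPolynomial σ K), i ≠ j ∧ i ≠ k ∧
      D.IsHomogeneous n ∧ D ∣ F i ∧ D ∣ F j ∧ ¬ D ∣ F k ∧
      E.IsHomogeneous n ∧ E ∣ F i ∧ E ∣ F k := by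
  have exists_not_dvd {p : MvPolynomial σ K} {l : ℕ} (hp : p.IsHomogeneous l) (hp0 : p ≠ 0)
      (hl : n ≤ l) : ∃ i, ¬ p ∣ F i := by
    by_contra! hdvd
    exact (hdeg p hdvd).not_ge (hp.totalDegree hp0 ▸ hl)
  obtain ⟨s⟩ : Nonempty σ := inferInstance
  obtain ⟨i, -⟩ := exists_not_dvd (isHomogeneous_X_pow s n) (pow_ne_zero n (X_ne_zero s)) le_rfl
  obtain ⟨j, hFij⟩ := exists_not_dvd (hF i) (hF0 i) n.le_succ
  have hij : i ≠ j := fun h ↦ hFij (h ▸ dvd_rfl)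
  obtain ⟨D, hD, hDi, hDj⟩ := hgcd i j hij
  obtain ⟨k, hDk⟩ := exists_not_dvd hD (ne_zero_of_dvd_ne_zero (hF0 i) hDi) le_rfl
  have hik : i ≠ k := fun h ↦ hDk (h ▸ hDi)
  obtain ⟨E, hE, hEi, hEk⟩ := hgcd i k hik
  exact ⟨i, j, k, D, E, hij, hik, hD, hDi, hDj, hDk, hE, hEi, hEk⟩

end Algebra

section Counting

variable {K : Type*} [Field K]

/-- The punctured affine cone over the projective variety `V(F)`: the nonzero common zeros of the
family `F` in `K^σ`. Leaving out `0` makes it a union of full `Kˣ`-orbits. -/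
def puncturedCone {σ ι : Type*} (F : ι → MvPolynomial σ K) : Set (σ → K) :=
  {v | v ≠ 0 ∧ ∀ i, eval v (F i) = 0}

theorem ncard_projective_mul_pred [Fintype K] {σ ι : Type*} {d : ℕ}
    {F : ι → MvPolynomial σ K} (hF : ∀ i, (F i).IsHomogeneous d) :
    {x : Projectivization K (σ → K) | ∀ i, eval x.rep (F i) = 0}.ncard * (Fintype.card K - 1)
      = (puncturedCone F).ncard := by
  classical
  rw [← Fintype.card_units, ← Nat.card_eq_fintype_card, ← Set.ncard_univ, ← Set.ncard_prod]
  refine Set.BijOn.ncard_eq (f := fun y ↦ (y.2 : K) • y.1.rep) ⟨?_, ?_, ?_⟩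
  · rintro ⟨x, u⟩ ⟨hx, -⟩
    refine ⟨smul_ne_zero u.ne_zero x.rep_nonzero, fun i ↦ ?_⟩
    rw [eval_smul_of_isHomogeneous (hF i), hx i, mul_zero]
  · rintro ⟨x, u⟩ - ⟨y, w⟩ - (h : (u : K) • x.rep = (w : K) • y.rep)
    obtain rfl : x = y := by
      rw [← x.mk_rep, ← y.mk_rep, Projectivization.mk_eq_mk_iff]
      refine ⟨u⁻¹ * w, ?_⟩
      rw [mul_smul, Units.smul_def w, ← h, ← Units.smul_def, inv_smul_smul]
    rw [Units.ext (smul_left_injective K x.rep_nonzero h)]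
  · rintro v ⟨hv0, hv⟩
    obtain ⟨u, hu⟩ := Projectivization.exists_smul_eq_mk_rep K v hv0
    refine ⟨(.mk K v hv0, u⁻¹), ⟨fun i ↦ ?_, Set.mem_univ _⟩, ?_⟩
    · rw [← hu, Units.smul_def, eval_smul_of_isHomogeneous (hF i), hv i, mul_zero]
    · simp only [← hu, ← Units.smul_def, inv_smul_smul]

theorem ncard_puncturedCone_add_one [Fintype K] {σ ι : Type*} [Fintype σ] [Fintype ι]
    {ℓ : ι → MvPolynomial σ K} (hℓ : ∀ i, (ℓ i).IsHomogeneous 1) (hli : LinearIndependent K ℓ) :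
    (puncturedCone ℓ).ncard + 1 = Fintype.card K ^ (Fintype.card σ - Fintype.card ι) := by
  classical
  have hspan (i : ι) : ∃ c : σ → K, ∑ j, c j • X j = ℓ i := by
    rw [← Submodule.mem_span_range_iff_exists_fun, ← homogeneousSubmodule_one_eq_span_X]
    exact hℓ i
  choose M hM using hspan
  have hrank : (Matrix.of M).rank = Fintype.card ι := by
    refine LinearIndependent.rank_matrix
      (LinearIndependent.of_comp (Fintype.linearCombination K (X : σ → MvPolynomial σ K)) ?_)
    convert hli
    exact funext hM
  have hcone : puncturedCone ℓ = ((Matrix.of M).mulVecLin.ker : Set (σ → K)) \ {0} := by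
    ext v
    simp [puncturedCone, ← hM, smul_eval, _root_.funext_iff, Matrix.mulVec, dotProduct, and_comm]
  have hker := (Matrix.of M).mulVecLin.finrank_range_add_finrank_ker
  rw [← Matrix.rank, hrank, Module.finrank_fintype_fun_eq_card] at hker
  rw [hcone, Set.ncard_sdiff_singleton_add_one (zero_mem _), ← Nat.card_coe_set_eq,
    ← Nat.card_eq_fintype_card, ← hker, Nat.add_sub_cancel_left]
  exact Module.natCard_eq_pow_finrank

theorem ncard_eval_eq_zero_le [Fintype K] {n : ℕ} {p : MvPolynomial (Fin (n + 1)) K} (hp : p ≠ 0) :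
    {v : Fin (n + 1) → K | eval v p = 0}.ncard ≤ p.totalDegree * Fintype.card K ^ n := by
  classical
  have hq : (0 : ℚ≥0) < Fintype.card K := mod_cast Fintype.card_pos
  have h := schwartz_zippel_totalDegree hp (Finset.univ : Finset K)
  rw [Fintype.piFinset_univ, Finset.card_univ, div_le_div_iff₀ (pow_pos hq _) hq, pow_succ,
    ← mul_assoc, mul_le_mul_iff_left₀ hq] at h
  rw [Set.ncard_eq_toFinset_card', Set.toFinset_ofPred]
  exact_mod_cast h

theorem puncturedCone_subset_of_eq_mul {σ ι : Type*} {F : ι → MvPolynomial σ K} {i j k : ι}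
    {a b c e G : MvPolynomial σ K} (hi : F i = c * G * a) (hj : F j = c * G * b)
    (hk : F k = a * G * e) :
    puncturedCone F ⊆ {v | eval v G = 0} ∪
      (puncturedCone ![a, b] ∪ (puncturedCone ![a, c] ∪ puncturedCone ![c, e])) := by
  rintro v ⟨hv0, hv⟩
  have hvi := hv i
  have hvj := hv j
  have hvk := hv k
  simp only [hi, hj, hk, map_mul, mul_eq_zero] at hvi hvj hvk
  simp only [puncturedCone, Set.mem_union, Set.mem_ofPred_eq, Fin.forall_fin_two,
    Matrix.cons_val_zero, Matrix.cons_val_one]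
  tauto

theorem ncard_puncturedCone_add_three_le [Fintype K] {m g : ℕ} {ι : Type*}
    {F : ι → MvPolynomial (Fin (m + 1)) K} {i j k : ι} {D E : MvPolynomial (Fin (m + 1)) K}
    (hF : ∀ i, (F i).IsHomogeneous (g + 2)) (hij : LinearIndependent K ![F i, F j])
    (hik : LinearIndependent K ![F i, F k])
    (hD : D.IsHomogeneous (g + 1)) (hDi : D ∣ F i) (hDj : D ∣ F j) (hDk : ¬ D ∣ F k)
    (hE : E.IsHomogeneous (g + 1)) (hEi : E ∣ F i) (hEk : E ∣ F k) :
    (puncturedCone F).ncard + 3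
      ≤ g * Fintype.card K ^ m + 3 * Fintype.card K ^ (m - 1) := by
  obtain ⟨a, b, ha, hb, hab, hia, hjb⟩ := exists_linear_cofactors (hF i) (hF j) hij hD hDi hDj
  obtain ⟨c, e, hc, he, hce, hic, hke⟩ := exists_linear_cofactors (hF i) (hF k) hik hE hEi hEk
  have hDE : D * a = E * c := hia.symm.trans hic
  have hac : LinearIndependent K ![a, c] := linearIndependent_of_mul_eq_mul (hab.ne_zero 0)
    (hce.ne_zero 0) hDE fun hdvd ↦ hDk (hdvd.trans hEk)
  obtain ⟨G, hG, rfl, rfl⟩ := exists_common_cofactor hE ha hc hac hDE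
  have hG0 : G ≠ 0 := right_ne_zero_of_mul (left_ne_zero_of_mul (hia ▸ hij.ne_zero 0))
  have hGcard := hG.totalDegree hG0 ▸ ncard_eval_eq_zero_le hG0
  have hpair {x y : MvPolynomial (Fin (m + 1)) K} (hx : x.IsHomogeneous 1)
      (hy : y.IsHomogeneous 1) (hxy : LinearIndependent K ![x, y]) :
      (puncturedCone ![x, y]).ncard + 1 = Fintype.card K ^ (m - 1) := by
    rw [ncard_puncturedCone_add_one (Fin.forall_fin_two.mpr ⟨hx, hy⟩) hxy]
    simp only [Fintype.card_fin, Nat.reduceSubDiff]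
  have hcover : (puncturedCone F).ncard ≤ {v | eval v G = 0}.ncard + ((puncturedCone ![a, b]).ncard
      + ((puncturedCone ![a, c]).ncard + (puncturedCone ![c, e]).ncard)) := by
    refine (Set.ncard_le_ncard (puncturedCone_subset_of_eq_mul hia hjb hke)).trans ?_
    refine (Set.ncard_union_le _ _).trans (Nat.add_le_add_left ?_ _)
    exact (Set.ncard_union_le _ _).trans (Nat.add_le_add_left (Set.ncard_union_le _ _) _)
  linarith [hpair ha hb hab, hpair ha hc hac, hpair hc he hce]

end Counting

section Bound

theorem pp_natCast_sub_one (q n : ℕ) : pp q (n - 1) = ∑ i ∈ Finset.range n, q ^ i := by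
  rcases n with _ | n
  · simp [pp]
  · simp [pp, (Int.natCast_nonneg n).not_gt]

theorem pp_natCast_sub_one_mul_add_one {q : ℕ} (hq : 1 ≤ q) (n : ℕ) :
    pp q (n - 1) * (q - 1) + 1 = q ^ n := by
  rw [pp_natCast_sub_one, geom_sum_mul_of_one_le hq, Nat.sub_add_cancel (Nat.one_le_pow _ _ hq)]

theorem lt_of_mul_pred_add_three_le {N P Q g q : ℕ} (hgq : g + 2 < q) (hP : P * (q - 1) + 1 = Q)
    (hN : N * (q - 1) + 3 ≤ g * (Q * q) + 3 * Q) : N < (g + 1) * Q + P := by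
  obtain ⟨p, rfl⟩ : ∃ p, q = p + 1 := ⟨q - 1, by omega⟩
  rw [Nat.add_sub_cancel] at hP hN
  have hcoeff : (g * (p + 1) + 3) * Q ≤ ((g + 1) * p + 1) * Q :=
    Nat.mul_le_mul_right Q (by linarith)
  refine Nat.lt_of_mul_lt_mul_right (a := p) ?_
  linarith

theorem high_correlation_case2_general {K ι : Type*} [Field K] [Fintype K] {d m : ℕ} (hm : 1 ≤ m)
    (hd : 1 < d) (hdq : d < Fintype.card K) {F : ι → MvPolynomial (Fin (m + 1)) K}
    (hli : LinearIndependent K F) (hhom : ∀ i, (F i).IsHomogeneous d)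
    (hgcd : ∀ i j, i ≠ j → ∃ D : MvPolynomial (Fin (m + 1)) K,
      D.IsHomogeneous (d - 1) ∧ D ∣ F i ∧ D ∣ F j)
    (hgcdall : ∀ E : MvPolynomial (Fin (m + 1)) K, (∀ i, E ∣ F i) → E.totalDegree < d - 1) :
    {x : Projectivization K (Fin (m + 1) → K) | ∀ i, eval x.rep (F i) = 0}.ncard
      < (d - 1) * Fintype.card K ^ (m - 1) + pp (Fintype.card K) ((m : ℤ) - 2) := by
  obtain ⟨g, rfl⟩ : ∃ g, d = g + 2 := ⟨d - 2, by omega⟩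
  obtain ⟨m, rfl⟩ : ∃ n, m = n + 1 := ⟨m - 1, by omega⟩
  obtain ⟨i, j, k, D, E, hij, hik, hD, hDi, hDj, hDk, hE, hEi, hEk⟩ :=
    exists_close_triple hhom hli.ne_zero hgcd hgcdall
  have hpair {i j : ι} (hij : i ≠ j) : LinearIndependent K ![F i, F j] := by
    rw [show ![F i, F j] = F ∘ ![i, j] from FinVec.map_eq F ![i, j]]
    exact hli.comp _ (injective_pair_iff_ne.mpr hij)
  have hcone := ncard_puncturedCone_add_three_le hhom (hpair hij) (hpair hik) hD hDi hDj hDk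
    hE hEi hEk
  rw [← ncard_projective_mul_pred hhom, pow_succ, Nat.add_sub_cancel] at hcone
  have hpp := pp_natCast_sub_one_mul_add_one (Fintype.card_pos (α := K)) m
  rw [Nat.add_sub_cancel, show ((m + 1 : ℕ) : ℤ) - 2 = m - 1 by push_cast; ring]
  exact lt_of_mul_pred_add_three_le hdq hpp hcone

end Bound

/-- High correlation, second subcase: assume `1 < d < q`, `1 ≤ r ≤ m+1`, and let
`F₁,…,F_r` be linearly independent homogeneous polynomials of degree `d` in
`F_q[x₀,…,x_m]` such that any two have a gcd of degree `d-1`, every common factor of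
all of them has degree `< d-1`, and they have no common linear factor. Then
`|V(F₁,…,F_r)| < (d-1)q^(m-1) + p_(m-2) + ⌊q^(m-r)⌋`. -/
theorem high_correlation_case2 (q d m r : ℕ) {K : Type} [Field K] [Fintype K]
    (hq : Fintype.card K = q) (hm : 1 ≤ m) (hd : 1 < d) (hdq : d < q)
    (hr : 1 ≤ r) (hrm : r ≤ m + 1)
    (Fs : Fin r → MvPolynomial (Fin (m + 1)) K)
    (hli : LinearIndependent K Fs) (hhom : ∀ i, (Fs i).IsHomogeneous d)
    (hgcd : ∀ i j, i ≠ j → ∃ D : MvPolynomial (Fin (m + 1)) K,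
      D.IsHomogeneous (d - 1) ∧ D ∣ Fs i ∧ D ∣ Fs j ∧
      ∀ E : MvPolynomial (Fin (m + 1)) K, E ∣ Fs i → E ∣ Fs j → E ∣ D)
    (hgcdall : ∀ E : MvPolynomial (Fin (m + 1)) K, (∀ i, E ∣ Fs i) →
      E.totalDegree < d - 1)
    (hnolin : ¬ ∃ H : MvPolynomial (Fin (m + 1)) K,
      H.IsHomogeneous 1 ∧ H ≠ 0 ∧ ∀ i, H ∣ Fs i) :
    Set.ncard {x : Projectivization K (Fin (m + 1) → K) | ∀ i, eval x.rep (Fs i) = 0}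
      < (d - 1) * q ^ (m - 1) + pp q ((m : ℤ) - 2) + flq q m r := by
  subst hq
  exact (high_correlation_case2_general hm hd hdq hli hhom (fun i j hij ↦ (hgcd i j hij).imp
    fun _ hD ↦ ⟨hD.1, hD.2.1, hD.2.2.1⟩) hgcdall).trans_le (Nat.le_add_right _ _)
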